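/- arXiv:2103.16458 — 4 statements merged into one kernel-verified Lean document; each statement's English description precedes it below -/
import Mathlib

section
/- Let n ≥ 2, let f : ℂⁿ → ℂ be holomorphic (entire), and let p ∈ ℂⁿ with f(p) ≠ 0. Let X be a holomorphic map from an open neighborhood of p in ℂⁿ to ℂⁿ with X(p) ≠ 0 and df(p)(X(p)) = 0. Let ε > 0 and let Z : B(0,ε) ⊆ ℂ → ℂⁿ be holomorphic with Z(0) = p, Z′(T) = X(Z(T)) for all T ∈ B(0,ε), with Z taking values in the domain of X and with f(Z(T)) ≠ 0 for all T ∈ B(0,ε). Define h : B(0,ε) → ℝ by h(T) = (1 + |f(Z(T))|²·u(|f(Z(T))|²)²)·|df(Z(T))(X(Z(T)))|² + ‖X(Z(T))‖². Then h(0)·(∂∂̄h)(0) − (∂h)(0)·(∂̄h)(0) ≥ 0; equivalently, the Gaussian curvature of the conformal metric h(T)|dT|² at T = 0 is ≤ 0. -/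
open Complex Filter Topology Metric
open scoped ComplexOrder

/-- The function `u(t) = (t-1)/(t log t)` for `t ≠ 1`, extended by `u(1) = 1`. -/
noncomputable def u (t : ℝ) : ℝ := if t = 1 then 1 else (t - 1) / (t * Real.log t)

/-- Wirtinger derivative `∂g` of a complex-valued function on `ℂ` (real-differentiable sense). -/
noncomputable def wdz (g : ℂ → ℂ) (z : ℂ) : ℂ :=
  (fderiv ℝ g z 1 - Complex.I * fderiv ℝ g z Complex.I) / 2

/-- Wirtinger derivative `∂̄g` of a complex-valued function on `ℂ`. -/
noncomputable def wdzbar (g : ℂ → ℂ) (z : ℂ) : ℂ :=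
  (fderiv ℝ g z 1 + Complex.I * fderiv ℝ g z Complex.I) / 2

/-- `∂h` for a real-valued `h`. -/
noncomputable def wdzR (h : ℂ → ℝ) : ℂ → ℂ := wdz fun w => (h w : ℂ)

/-- `∂̄h` for a real-valued `h`. -/
noncomputable def wdzbarR (h : ℂ → ℝ) : ℂ → ℂ := wdzbar fun w => (h w : ℂ)

/-- `∂∂̄h` for a real-valued `h`. -/
noncomputable def wlapR (h : ℂ → ℝ) : ℂ → ℂ := wdz (wdzbarR h)

/-- The numerator `h·∂∂̄h − ∂h·∂̄h` of (−1/2 times) the Gaussian curvature of `h|dz|²`. -/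
noncomputable def curvNum (h : ℂ → ℝ) (z : ℂ) : ℂ :=
  (h z : ℂ) * wlapR h z - wdzR h z * wdzbarR h z

/-- The Gaussian curvature `K = −2(h·∂∂̄h − ∂h·∂̄h)/h³` of the conformal metric `h|dz|²`. -/
noncomputable def gaussCurv (h : ℂ → ℝ) (z : ℂ) : ℂ :=
  -2 * curvNum h z / (h z : ℂ) ^ 3

/-- Wirtinger derivative predicate. -/
def W (g : ℂ → ℂ) (α β z : ℂ) : Prop :=
  HasFDerivAt (𝕜 := ℝ) g (α • (ContinuousLinearMap.id ℝ ℂ) + β • (Complex.conjCLE : ℂ →L[ℝ] ℂ)) z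

theorem W.wdz {g : ℂ → ℂ} {α β z : ℂ} (h : W g α β z) : wdz g z = α := by
  unfold W at h
  simp only [_root_.wdz, h.fderiv]
  simp
  linear_combination (β/2 - α/2) * Complex.I_mul_I

theorem W.wdzbar {g : ℂ → ℂ} {α β z : ℂ} (h : W g α β z) : wdzbar g z = β := by
  unfold W at h
  simp only [_root_.wdzbar, h.fderiv]
  simp
  linear_combination (α/2 - β/2) * Complex.I_mul_I

theorem W.add {f g : ℂ → ℂ} {α β γ δ z : ℂ} (h : W f α β z) (k : W g γ δ z) :
    W (fun t => f t + g t) (α + γ) (β + δ) z := by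
  unfold W at *
  refine (HasFDerivAt.add h k).congr_fderiv ?_
  ext <;> simp <;> ring

theorem W.mul {f g : ℂ → ℂ} {α β γ δ z : ℂ} (h : W f α β z) (k : W g γ δ z) :
    W (fun t => f t * g t) (α * g z + f z * γ) (β * g z + f z * δ) z := by
  unfold W at *
  refine (HasFDerivAt.mul h k).congr_fderiv ?_
  ext x <;> simp <;> ring

theorem W.sum {ι : Type*} (s : Finset ι) {f : ι → ℂ → ℂ} {α β : ι → ℂ} {z : ℂ}
    (h : ∀ i, W (f i) (α i) (β i) z) :
    W (fun t => ∑ i ∈ s, f i t) (∑ i ∈ s, α i) (∑ i ∈ s, β i) z := by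
  unfold W at *
  refine (HasFDerivAt.fun_sum (fun i _ => h i)).congr_fderiv ?_
  ext x <;> simp [Finset.sum_add_distrib]
  all_goals simp [Finset.sum_mul]

theorem W.hol {f : ℂ → ℂ} {z : ℂ} (h : DifferentiableAt ℂ f z) : W f (deriv f z) 0 z := by
  unfold W
  refine (h.hasDerivAt.hasFDerivAt.restrictScalars ℝ).congr_fderiv ?_
  ext x <;> simp [mul_comm]

theorem W.conj {f : ℂ → ℂ} {α β z : ℂ} (h : W f α β z) :
    W (fun t => (starRingEnd ℂ) (f t)) ((starRingEnd ℂ) β) ((starRingEnd ℂ) α) z := by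
  unfold W at *
  refine ((Complex.conjCLE : ℂ →L[ℝ] ℂ).hasFDerivAt.comp z h).congr_fderiv ?_
  ext x <;> simp <;> ring

theorem W.of_diff {f : ℂ → ℂ} {z : ℂ} (h : DifferentiableAt ℝ f z) :
    W f (_root_.wdz f z) (_root_.wdzbar f z) z := by
  unfold W
  refine h.hasFDerivAt.congr_fderiv ?_
  ext x
  have hx : (fderiv ℝ f z) x = x.re * (fderiv ℝ f z) 1 + x.im * (fderiv ℝ f z) Complex.I := by
    conv_lhs => rw [show x = x.re • (1 : ℂ) + x.im • Complex.I by
      simp [Complex.re_add_im]]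
    rw [map_add, map_smul, map_smul]
    simp
  have h1 : x + (starRingEnd ℂ) x = 2 * x.re := by rw [Complex.add_conj]; simp
  have h2 : x - (starRingEnd ℂ) x = 2 * x.im * Complex.I := by rw [Complex.sub_conj]; simp
  rw [hx]
  simp only [_root_.wdz, _root_.wdzbar, add_apply, ContinuousLinearMap.coe_smul', Pi.smul_apply,
    ContinuousLinearMap.id_apply, smul_eq_mul, ContinuousLinearEquiv.coe_coe, Complex.conjCLE_apply]
  linear_combination (-(fderiv ℝ f z) 1 / 2) * h1 + (Complex.I * (fderiv ℝ f z) Complex.I / 2) * h2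
    + (x.im * (fderiv ℝ f z) Complex.I) * Complex.I_mul_I

theorem W.congr {f g : ℂ → ℂ} {α β z : ℂ} (h : W f α β z) (e : g =ᶠ[𝓝 z] f) : W g α β z :=
  HasFDerivAt.congr_of_eventuallyEq h e

theorem key {n : ℕ} (a : ℂ → ℝ) (g : ℂ → ℂ) (Y : ℂ → EuclideanSpace ℂ (Fin n))
    (ha : ContDiffAt ℝ 2 a 0) (ha0 : 0 ≤ a 0) (hg : AnalyticAt ℂ g 0) (hY : AnalyticAt ℂ Y 0)
    (hg0 : g 0 = 0) : 0 ≤ curvNum (fun T => a T * ‖g T‖ ^ 2 + ‖Y T‖ ^ 2) 0 := by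
  set b : ℂ → ℂ := fun T => (a T : ℂ) with hb
  have hbC : ContDiffAt ℝ 2 b 0 := Complex.ofRealCLM.contDiff.contDiffAt.comp 0 ha
  have hYi : ∀ i, AnalyticAt ℂ (fun T => Y T i) 0 := fun i =>
    ((EuclideanSpace.proj i : EuclideanSpace ℂ (Fin n) →L[ℂ] ℂ).analyticAt _).comp hY
  have hrep : (fun T => ((a T * ‖g T‖ ^ 2 + ‖Y T‖ ^ 2 : ℝ) : ℂ)) = fun T =>
      b T * (g T * (starRingEnd ℂ) (g T)) + ∑ i, Y T i * (starRingEnd ℂ) (Y T i) := by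
    funext T
    rw [EuclideanSpace.norm_sq_eq]
    push_cast
    simp [hb, Complex.mul_conj']
  -- first derivatives near zero
  have h1 : ∀ᶠ T in 𝓝 (0 : ℂ), W (fun T => ((a T * ‖g T‖ ^ 2 + ‖Y T‖ ^ 2 : ℝ) : ℂ))
      (wdz b T * (g T * (starRingEnd ℂ) (g T)) + b T * (deriv g T * (starRingEnd ℂ) (g T))
        + ∑ i, deriv (fun T => Y T i) T * (starRingEnd ℂ) (Y T i))
      (wdzbar b T * (g T * (starRingEnd ℂ) (g T)) + b T * (g T * (starRingEnd ℂ) (deriv g T))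
        + ∑ i, Y T i * (starRingEnd ℂ) (deriv (fun T => Y T i) T)) T := by
    have e1 : ∀ᶠ T in 𝓝 (0 : ℂ), ContDiffAt ℝ 2 b T := hbC.eventually (by simp)
    have e3 : ∀ᶠ T in 𝓝 (0 : ℂ), ∀ i, AnalyticAt ℂ (fun T => Y T i) T :=
      Filter.eventually_all.2 fun i => (hYi i).eventually_analyticAt
    filter_upwards [e1, hg.eventually_analyticAt, e3] with T t1 t2 t3
    rw [hrep]
    have wb := W.of_diff (t1.differentiableAt (by norm_num))
    have wg := W.hol t2.differentiableAt
    have wY := W.sum Finset.univ fun i =>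
      (W.hol (t3 i).differentiableAt).mul (W.hol (t3 i).differentiableAt).conj
    have := (wb.mul (wg.mul wg.conj)).add wY
    convert this using 1 <;> simp
  have hbar : wdzbarR (fun T => a T * ‖g T‖ ^ 2 + ‖Y T‖ ^ 2) =ᶠ[𝓝 0] fun T =>
      (wdzbar b T * (g T * (starRingEnd ℂ) (g T)) + b T * (g T * (starRingEnd ℂ) (deriv g T))
        + ∑ i, Y T i * (starRingEnd ℂ) (deriv (fun T => Y T i) T)) := by
    filter_upwards [h1] with T hT
    exact hT.wdzbar
  have hd : DifferentiableAt ℝ (wdzbar b) 0 := by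
    have : DifferentiableAt ℝ (fderiv ℝ b) 0 :=
      (hbC.fderiv_right (m := 1) (by norm_num)).differentiableAt (by norm_num)
    unfold wdzbar
    fun_prop
  have wg := W.hol hg.differentiableAt
  have wg' := W.hol hg.deriv.differentiableAt
  have wb := W.of_diff (hbC.differentiableAt (by norm_num))
  have w2 := ((((W.of_diff hd).mul (wg.mul wg.conj)).add (wb.mul (wg.mul wg'.conj))).add
    (W.sum Finset.univ fun i => (W.hol (hYi i).differentiableAt).mul
      (W.hol (hYi i).deriv.differentiableAt).conj)).congr hbar
  have hlap := w2.wdz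
  have hz := h1.self_of_nhds.wdz
  have hzb := h1.self_of_nhds.wdzbar
  unfold curvNum wlapR
  rw [hlap]
  unfold wdzR wdzbarR
  rw [hz, hzb]
  set y := Y 0
  set y' : EuclideanSpace ℂ (Fin n) := WithLp.toLp 2 fun i => deriv (fun T => Y T i) 0 with hy'
  have i1 : ∑ i, deriv (fun T => Y T i) 0 * (starRingEnd ℂ) (y i) = inner ℂ y y' := by
    simp [PiLp.inner_apply, hy']
  have i2 : ∑ i, y i * (starRingEnd ℂ) (deriv (fun T => Y T i) 0) = inner ℂ y' y := by
    simp [PiLp.inner_apply, hy']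
  have i3 : ∑ i, deriv (fun T => Y T i) 0 * (starRingEnd ℂ) (deriv (fun T => Y T i) 0)
      = ((‖y'‖ ^ 2 : ℝ) : ℂ) := by
    rw [EuclideanSpace.norm_sq_eq]
    simp [hy', Complex.mul_conj']
  have i4 : (inner ℂ y y' : ℂ) * inner ℂ y' y = ((‖(inner ℂ y y' : ℂ)‖ ^ 2 : ℝ) : ℂ) := by
    rw [← inner_conj_symm y' y, Complex.mul_conj']; simp
  simp only [hg0, map_zero, mul_zero, zero_mul, add_zero, zero_add, i1, i2, i3, i4, norm_zero,
    ne_eq, OfNat.ofNat_ne_zero, not_false_eq_true, zero_pow]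
  rw [Complex.mul_conj']
  have cs : ‖(inner ℂ y y' : ℂ)‖ ^ 2 ≤ ‖y‖ ^ 2 * ‖y'‖ ^ 2 := by
    rw [← mul_pow]
    exact pow_le_pow_left₀ (norm_nonneg _) (norm_inner_le_norm y y') 2
  have : 0 ≤ ‖y‖ ^ 2 * (a 0 * ‖deriv g 0‖ ^ 2 + ‖y'‖ ^ 2) - ‖(inner ℂ y y' : ℂ)‖ ^ 2 := by
    have : 0 ≤ ‖y‖ ^ 2 * (a 0 * ‖deriv g 0‖ ^ 2) := by positivity
    linarith
  simp only [hb]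
  exact_mod_cast this

theorem u_contDiffAt {t : ℝ} (ht : 0 < t) : ContDiffAt ℝ 2 u t := by
  have hl : AnalyticAt ℝ (dslope Real.log 1) t := by
    by_cases h1 : t = 1
    · subst h1
      obtain ⟨q, hq⟩ := analyticAt_log (x := 1) one_pos
      exact hq.has_fpower_series_dslope_fslope.analyticAt
    · have : AnalyticAt ℝ (fun x => (x - 1)⁻¹ * (Real.log x - Real.log 1)) t :=
        ((analyticAt_id.sub analyticAt_const).inv (sub_ne_zero.2 h1)).mul
          ((analyticAt_log ht).sub analyticAt_const)
      refine this.congr ?_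
      filter_upwards [isOpen_ne.mem_nhds h1] with x hx
      rw [dslope_of_ne _ hx, slope_def_field, div_eq_inv_mul]
  have hne : dslope Real.log 1 t ≠ 0 := by
    by_cases h1 : t = 1
    · subst h1; simp
    · rw [dslope_of_ne _ h1, slope_def_field]
      have : Real.log t ≠ 0 := Real.log_ne_zero_of_pos_of_ne_one ht h1
      have := sub_ne_zero.2 h1
      rw [Real.log_one, sub_zero]
      exact div_ne_zero ‹_› ‹_›
  have hu : u = fun t => (t * dslope Real.log 1 t)⁻¹ := by
    funext t
    unfold u
    split_ifs with h
    · subst h; simp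
    · rw [dslope_of_ne _ h, slope_def_field]
      simp [div_eq_mul_inv]; ring
  rw [hu]
  exact ((analyticAt_id.mul hl).inv (mul_ne_zero ht.ne' hne)).contDiffAt

/-- along a leaf through `p ∉ Z(f)` of a vector field `X` with
`X(p) ∈ Ker df(p)`, the curvature numerator of the pulled-back Grauert-type metric
is nonnegative at `T = 0`, i.e. the Gaussian curvature there is `≤ 0`. -/
theorem stmt0 (n : ℕ) (hn : 2 ≤ n)
    (f : EuclideanSpace ℂ (Fin n) → ℂ) (hf : Differentiable ℂ f)
    (p : EuclideanSpace ℂ (Fin n)) (hfp : f p ≠ 0)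
    (V : Set (EuclideanSpace ℂ (Fin n))) (hV : IsOpen V) (hpV : p ∈ V)
    (X : EuclideanSpace ℂ (Fin n) → EuclideanSpace ℂ (Fin n))
    (hX : DifferentiableOn ℂ X V) (hXp : X p ≠ 0)
    (hker : fderiv ℂ f p (X p) = 0)
    (ε : ℝ) (hε : 0 < ε)
    (Z : ℂ → EuclideanSpace ℂ (Fin n))
    (hZ : DifferentiableOn ℂ Z (Metric.ball 0 ε))
    (hZ0 : Z 0 = p)
    (hZV : ∀ T ∈ Metric.ball (0 : ℂ) ε, Z T ∈ V)
    (hZ' : ∀ T ∈ Metric.ball (0 : ℂ) ε, deriv Z T = X (Z T))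
    (hfZ : ∀ T ∈ Metric.ball (0 : ℂ) ε, f (Z T) ≠ 0) :
    0 ≤ curvNum (fun T =>
      (1 + ‖f (Z T)‖ ^ 2 * u (‖f (Z T)‖ ^ 2) ^ 2) *
        ‖fderiv ℂ f (Z T) (X (Z T))‖ ^ 2 + ‖X (Z T)‖ ^ 2) 0 := by
  
  have hB : Metric.ball (0 : ℂ) ε ∈ 𝓝 0 := Metric.ball_mem_nhds 0 hε
  have h0 : (0 : ℂ) ∈ Metric.ball (0 : ℂ) ε := Metric.mem_ball_self hε
  have hF : DifferentiableOn ℂ (fun T => f (Z T)) (Metric.ball 0 ε) :=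
    hf.comp_differentiableOn hZ
  have hFA : AnalyticAt ℂ (fun T => f (Z T)) 0 := hF.analyticAt hB
  have hZA : AnalyticAt ℂ Z 0 := hZ.analyticAt hB
  have hYA : AnalyticAt ℂ (fun T => X (Z T)) 0 := by
    refine hZA.deriv.congr ?_
    filter_upwards [hB] with T hT using hZ' T hT
  have hgA : AnalyticAt ℂ (fun T => fderiv ℂ f (Z T) (X (Z T))) 0 := by
    refine hFA.deriv.congr ?_
    filter_upwards [hB] with T hT
    have hz : HasDerivAt Z (X (Z T)) T := by
      rw [← hZ' T hT]
      exact (hZ.differentiableAt (Metric.isOpen_ball.mem_nhds hT)).hasDerivAt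
    exact ((hf (Z T)).hasFDerivAt.comp_hasDerivAt T hz).deriv
  have hs : ContDiffAt ℝ 2 (fun T => ‖f (Z T)‖ ^ 2) 0 :=
    (hFA.contDiffAt.restrict_scalars ℝ).norm_sq ℝ
  have hpos : 0 < ‖f (Z 0)‖ ^ 2 := pow_pos (norm_pos_iff.2 (hfZ 0 h0)) 2
  have hu : ContDiffAt ℝ 2 (fun T => u (‖f (Z T)‖ ^ 2)) 0 :=
    ContDiffAt.comp (g := u) (f := fun T => ‖f (Z T)‖ ^ 2) 0 (u_contDiffAt hpos) hs
  refine key (fun T => 1 + ‖f (Z T)‖ ^ 2 * u (‖f (Z T)‖ ^ 2) ^ 2) _ _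
    (contDiffAt_const.add (hs.mul (hu.pow 2))) (by positivity) hgA hYA ?_
  simpa [hZ0] using hker
end

section
/- Let Ω ⊆ ℂ∖{0} be open and let ψ : Ω → ℂ be holomorphic. Define h : Ω → ℝ by h(w) = 1 + |w|²·u(|w|²)² + |ψ(w)|². Then for every w ∈ Ω, h(w)·(∂∂̄h)(w) − (∂h)(w)·(∂̄h)(w) ≥ 0; equivalently, the Gaussian curvature of the conformal metric h(w)|dw|² is ≤ 0 everywhere on Ω. -/
open Complex Filter Topology Metric
open scoped ComplexOrder

noncomputable def SS : ℝ → ℝ := dslope Real.sinh 0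

lemma SS_mul (x : ℝ) : x * SS x = Real.sinh x := by
  have := sub_smul_dslope Real.sinh 0 x
  simpa [SS] using this

lemma SS_an (x : ℝ) : AnalyticAt ℝ SS x := by
  by_cases hx : x = 0
  · subst hx
    obtain ⟨p, hp⟩ : AnalyticAt ℝ Real.sinh 0 := Real.analyticAt_sinh
    exact ⟨_, hp.has_fpower_series_dslope_fslope⟩
  · have h1 : AnalyticAt ℝ (fun y => Real.sinh y / y) x :=
      Real.analyticAt_sinh.div analyticAt_id hx
    refine h1.congr ?_
    filter_upwards [isOpen_ne.mem_nhds hx] with y hy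
    rw [← SS_mul, mul_div_cancel_left₀ _ hy]

lemma SS_d0 (x : ℝ) : HasDerivAt SS (deriv SS x) x := (SS_an x).differentiableAt.hasDerivAt
lemma SS_d1 (x : ℝ) : HasDerivAt (deriv SS) (deriv (deriv SS) x) x :=
  (SS_an x).deriv.differentiableAt.hasDerivAt
lemma SS_d2 (x : ℝ) : HasDerivAt (deriv (deriv SS)) (deriv (deriv (deriv SS)) x) x :=
  (SS_an x).deriv.deriv.differentiableAt.hasDerivAt

lemma SS_e1 (x : ℝ) : SS x + x * deriv SS x = Real.cosh x := by
  have h := (hasDerivAt_id x).mul (SS_d0 x)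
  have h2 : HasDerivAt (id * SS) (Real.cosh x) x := by
    have : id * SS = Real.sinh := by ext y; simp [SS_mul]
    rw [this]; exact Real.hasDerivAt_sinh x
  simpa using h.unique h2

lemma SS_e2 (x : ℝ) : 2 * deriv SS x + x * deriv (deriv SS) x = Real.sinh x := by
  have h := (SS_d0 x).add ((hasDerivAt_id x).mul (SS_d1 x))
  have h2 : HasDerivAt (SS + id * deriv SS) (Real.sinh x) x := by
    have : SS + id * deriv SS = Real.cosh := by ext y; simp [SS_e1]
    rw [this]; exact Real.hasDerivAt_cosh x
  have := h.unique h2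
  simp at this
  linarith

lemma SS_e3 (x : ℝ) : 3 * deriv (deriv SS) x + x * deriv (deriv (deriv SS)) x = Real.cosh x := by
  have h := ((SS_d1 x).const_mul 2).add ((hasDerivAt_id x).mul (SS_d2 x))
  have h2 : HasDerivAt ((fun y => 2 * deriv SS y) + id * deriv (deriv SS)) (Real.cosh x) x := by
    have : (fun y => 2 * deriv SS y) + id * deriv (deriv SS) = Real.sinh := by
      ext y; simp [SS_e2]
    rw [this]; exact Real.hasDerivAt_sinh x
  have := h.unique h2
  simp at this
  linarith

lemma sq_le_sinh_sq (x : ℝ) : x ^ 2 ≤ Real.sinh x ^ 2 := by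
  rcases le_total 0 x with h | h
  · have := Real.self_le_sinh_iff.2 h
    nlinarith
  · have := Real.sinh_le_self_iff.2 h
    nlinarith

lemma SS_conv (x : ℝ) : (deriv SS x) ^ 2 ≤ SS x * deriv (deriv SS) x := by
  have e0 := SS_mul x
  have e1 := SS_e1 x
  have e2 := SS_e2 x
  have e3 := SS_e3 x
  by_cases hx : x = 0
  · subst hx
    simp at e1 e2 e3
    rw [e1, e2]; nlinarith
  · have h4 : 0 < x ^ 4 := by positivity
    have hs := sq_le_sinh_sq x
    have hc := Real.cosh_sq x
    have key : x ^ 4 * (SS x * deriv (deriv SS) x - (deriv SS x) ^ 2) = Real.sinh x ^ 2 - x ^ 2 := by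
      have a1 : x ^ 2 * deriv SS x = x * Real.cosh x - Real.sinh x := by
        rw [← e1, ← e0]; ring
      have a2 : x ^ 3 * deriv (deriv SS) x = x ^ 2 * Real.sinh x - 2 * (x ^ 2 * deriv SS x) := by
        rw [← e2]; ring
      have : x ^ 4 * (SS x * deriv (deriv SS) x - (deriv SS x) ^ 2)
        = (x * SS x) * (x ^ 3 * deriv (deriv SS) x) - (x ^ 2 * deriv SS x) ^ 2 := by ring
      rw [this, a2, a1, e0]
      linear_combination (- x ^ 2) * hc
    have : 0 ≤ SS x * deriv (deriv SS) x - (deriv SS x) ^ 2 := by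
      by_contra hcon
      push Not at hcon
      nlinarith [mul_neg_of_pos_of_neg h4 hcon]
    linarith

lemma SS_pos (x : ℝ) : 0 < SS x := by
  have e0 := SS_mul x
  rcases lt_trichotomy x 0 with h | h | h
  · have := Real.sinh_neg_iff.2 h
    by_contra hc; push Not at hc; nlinarith
  · subst h
    have := SS_e1 0
    simp at this; rw [this]; norm_num
  · have := Real.sinh_pos_iff.2 h
    by_contra hc; push Not at hc; nlinarith

noncomputable def G0 (s : ℝ) : ℝ := SS (s / 2) ^ 2
noncomputable def G1 (s : ℝ) : ℝ := SS (s / 2) * deriv SS (s / 2)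
noncomputable def G2 (s : ℝ) : ℝ :=
  (deriv SS (s / 2) ^ 2 + SS (s / 2) * deriv (deriv SS) (s / 2)) / 2

lemma G0_d (s : ℝ) : HasDerivAt G0 (G1 s) s := by
  have h := ((SS_d0 (s / 2)).comp s ((hasDerivAt_id s).div_const 2)).pow 2
  refine h.congr_deriv ?_
  simp [G1]; ring

lemma G1_d (s : ℝ) : HasDerivAt G1 (G2 s) s := by
  have h := ((SS_d0 (s / 2)).comp s ((hasDerivAt_id s).div_const 2)).mul
    ((SS_d1 (s / 2)).comp s ((hasDerivAt_id s).div_const 2))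
  refine h.congr_deriv ?_
  simp [G2]; ring

lemma G0_pos (s : ℝ) : 0 < G0 s := by have := SS_pos (s / 2); unfold G0; positivity

lemma G_conv (s : ℝ) : G1 s ^ 2 ≤ G0 s * G2 s := by
  have h := SS_conv (s / 2)
  have := SS_pos (s / 2)
  unfold G0 G1 G2
  nlinarith [mul_le_mul_of_nonneg_left h (sq_nonneg (SS (s / 2)))]

lemma G0_eq (t : ℝ) (ht : 0 < t) : t * u t ^ 2 = G0 (Real.log t) := by
  unfold u
  split_ifs with h
  · subst h
    have := SS_e1 0
    simp at this
    simp [G0, this]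
  · have hl : Real.log t ≠ 0 := Real.log_ne_zero_of_pos_of_ne_one ht h
    have e := SS_mul (Real.log t / 2)
    have : SS (Real.log t / 2) = Real.sinh (Real.log t / 2) * 2 / Real.log t := by
      rw [← e]; field_simp
    unfold G0
    rw [this, Real.sinh_eq]
    have hp : Real.exp (Real.log t / 2) ^ 2 = t := by
      rw [← Real.exp_nat_mul]
      rw [show ((2 : ℕ) : ℝ) * (Real.log t / 2) = Real.log t by push_cast; ring, Real.exp_log ht]
    rw [Real.exp_neg]
    have hE0 : Real.exp (Real.log t / 2) ≠ 0 := (Real.exp_pos _).ne'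
    clear this e h
    generalize Real.exp (Real.log t / 2) = E at hp hE0 ⊢
    generalize Real.log t = L at hl ⊢
    subst hp
    field_simp

/-- Wirtinger derivative pair. -/
def HasW (g : ℂ → ℂ) (a b z : ℂ) : Prop :=
  ∃ L : ℂ →L[ℝ] ℂ, HasFDerivAt g L z ∧ ∀ v, L v = a * v + b * (starRingEnd ℂ) v

lemma HasW.wdz {g : ℂ → ℂ} {a b z : ℂ} (h : HasW g a b z) : wdz g z = a := by
  obtain ⟨L, hL, hv⟩ := h
  rw [_root_.wdz, hL.fderiv, hv, hv]
  simp
  linear_combination (b - a) / 2 * I_sq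

lemma HasW.wdzbar {g : ℂ → ℂ} {a b z : ℂ} (h : HasW g a b z) : wdzbar g z = b := by
  obtain ⟨L, hL, hv⟩ := h
  rw [_root_.wdzbar, hL.fderiv, hv, hv]
  simp
  linear_combination (a - b) / 2 * I_sq

lemma HasW.congr {f g : ℂ → ℂ} {a b z : ℂ} (h : HasW g a b z) (hfg : f =ᶠ[𝓝 z] g) :
    HasW f a b z := by
  obtain ⟨L, hL, hv⟩ := h
  exact ⟨L, hL.congr_of_eventuallyEq hfg, hv⟩

lemma HasW.add {f g : ℂ → ℂ} {a b c d z : ℂ} (h : HasW f a b z) (h' : HasW g c d z) :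
    HasW (fun v => f v + g v) (a + c) (b + d) z := by
  obtain ⟨L, hL, hv⟩ := h
  obtain ⟨L', hL', hv'⟩ := h'
  exact ⟨L + L', hL.add hL', fun v => by simp [hv, hv']; ring⟩

lemma HasW.mul {f g : ℂ → ℂ} {a b c d z : ℂ} (h : HasW f a b z) (h' : HasW g c d z) :
    HasW (fun v => f v * g v) (f z * c + g z * a) (f z * d + g z * b) z := by
  obtain ⟨L, hL, hv⟩ := h
  obtain ⟨L', hL', hv'⟩ := h'
  exact ⟨_, hL.mul hL', fun v => by simp [hv, hv']; ring⟩

lemma HasW.conj {f : ℂ → ℂ} {a b z : ℂ} (h : HasW f a b z) :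
    HasW (fun v => (starRingEnd ℂ) (f v)) ((starRingEnd ℂ) b) ((starRingEnd ℂ) a) z := by
  obtain ⟨L, hL, hv⟩ := h
  exact ⟨_, (conjCLE.toContinuousLinearMap.hasFDerivAt).comp z hL,
    fun v => by simp [hv]; ring⟩

lemma HasW.const (c z : ℂ) : HasW (fun _ => c) 0 0 z :=
  ⟨0, hasFDerivAt_const c z, fun v => by simp⟩

lemma HasW.holo {f : ℂ → ℂ} {a z : ℂ} (h : HasDerivAt f a z) : HasW f a 0 z :=
  ⟨_, h.hasFDerivAt.restrictScalars ℝ, fun v => by simp; ring⟩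

lemma HasW.comp {F : ℂ → ℝ} {f : ℝ → ℝ} {f' : ℝ} {a b z : ℂ}
    (h : HasW (fun v => (F v : ℂ)) a b z) (hf : HasDerivAt f f' (F z)) :
    HasW (fun v => (f (F v) : ℂ)) (f' * a) (f' * b) z := by
  obtain ⟨L, hL, hv⟩ := h
  have hF : HasFDerivAt F (reCLM.comp L) z := by
    have := (reCLM.hasFDerivAt).comp z hL
    exact this
  have hLre : ∀ v, ((L v).re : ℂ) = L v := by
    have : HasFDerivAt (fun v => (F v : ℂ)) (ofRealCLM.comp (reCLM.comp L)) z :=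
      (ofRealCLM.hasFDerivAt).comp z hF
    intro v
    have := DFunLike.congr_fun (this.unique hL) v
    simpa using this
  refine ⟨_, (ofRealCLM.hasFDerivAt).comp z (hf.comp_hasFDerivAt z hF), fun v => ?_⟩
  have : (ofRealCLM ∘SL (f' • (reCLM ∘SL L))) v = (f' : ℂ) * ((L v).re : ℂ) := by simp
  rw [this, hLre, hv]; ring

noncomputable def ls (w : ℂ) : ℝ := Real.log (‖w‖ ^ 2)

lemma nsq_eq (z : ℂ) : ((‖z‖ ^ 2 : ℝ) : ℂ) = z * (starRingEnd ℂ) z := by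
  rw [Complex.mul_conj, Complex.normSq_eq_norm_sq]

lemma ls_W {w : ℂ} (hw : w ≠ 0) :
    HasW (fun v => (ls v : ℂ)) (1 / w) (1 / (starRingEnd ℂ) w) w := by
  have h1 : HasW (fun v => v) 1 0 w := HasW.holo (hasDerivAt_id w)
  have h2 := h1.mul h1.conj
  have h3 : HasW (fun v => ((‖v‖ ^ 2 : ℝ) : ℂ)) _ _ w :=
    h2.congr (Eventually.of_forall fun v => nsq_eq v)
  have hn : ‖w‖ ^ 2 ≠ 0 := by simpa using hw
  have h4 := HasW.comp h3 (Real.hasDerivAt_log hn)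
  have hc : (starRingEnd ℂ) w ≠ 0 := by simpa using hw
  convert h4 using 1
  · rfl
  · rw [ofReal_inv, nsq_eq]; simp; field_simp
  · rw [ofReal_inv, nsq_eq]; simp; field_simp

lemma alg (P A Q : ℝ) (a p q : ℂ) (hP : 0 < P) (hA : ‖a‖ ^ 2 ≤ P * A) (hQ : Q = ‖p‖ ^ 2) :
    0 ≤ (1 + P + Q) * (A + ‖q‖ ^ 2) - ‖a + q * (starRingEnd ℂ) p‖ ^ 2 := by
  subst hQ
  have hA0 : 0 ≤ A := by
    by_contra hc; push Not at hc
    nlinarith [mul_neg_of_pos_of_neg hP hc, sq_nonneg ‖a‖]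
  have key : 0 ≤ P * (‖q‖ ^ 2 * P + ‖p‖ ^ 2 * A + ‖a‖ ^ 2 + ‖q‖ ^ 2 * ‖p‖ ^ 2
      - ‖a + q * (starRingEnd ℂ) p‖ ^ 2) := by
    have h1 : 0 ≤ ‖(P : ℂ) * q - a * p‖ ^ 2 := sq_nonneg _
    have h2 := mul_le_mul_of_nonneg_left hA (sq_nonneg ‖p‖)
    simp only [← Complex.normSq_eq_norm_sq, Complex.normSq_apply] at *
    simp at *
    nlinarith
  have k2 := nonneg_of_mul_nonneg_right key hP
  have : 0 ≤ ‖q‖ ^ 2 := sq_nonneg _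
  nlinarith

/-- for `h(w) = 1 + |w|²u(|w|²)² + |ψ(w)|²` with `ψ` holomorphic on an
open `Ω ⊆ ℂ∖{0}`, the curvature numerator is everywhere nonnegative on `Ω`,
i.e. the Gaussian curvature of `h|dw|²` is `≤ 0` on `Ω`. -/
theorem stmt3 (Ω : Set ℂ) (hΩ : IsOpen Ω) (hΩ0 : (0 : ℂ) ∉ Ω)
    (ψ : ℂ → ℂ) (hψ : DifferentiableOn ℂ ψ Ω) :
    ∀ w ∈ Ω,
      0 ≤ curvNum (fun v => 1 + ‖v‖ ^ 2 * u (‖v‖ ^ 2) ^ 2 + ‖ψ v‖ ^ 2) w := by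
  intro w hw
  set h : ℂ → ℝ := fun v => 1 + ‖v‖ ^ 2 * u (‖v‖ ^ 2) ^ 2 + ‖ψ v‖ ^ 2 with hh
  have hne : ∀ v ∈ Ω, v ≠ 0 := fun v hv h0 => hΩ0 (h0 ▸ hv)
  have hhe : ∀ v ∈ Ω, h v = 1 + G0 (ls v) + ‖ψ v‖ ^ 2 := by
    intro v hv
    have := hne v hv
    simp only [hh]
    rw [G0_eq _ (by positivity)]; rfl
  have hd : ∀ v ∈ Ω, HasDerivAt ψ (deriv ψ v) v := fun v hv =>
    (hψ.differentiableAt (hΩ.mem_nhds hv)).hasDerivAt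
  have hd2 : HasDerivAt (deriv ψ) (deriv (deriv ψ) w) w :=
    ((hψ.analyticAt (hΩ.mem_nhds hw)).deriv.differentiableAt).hasDerivAt
  have H : ∀ v ∈ Ω, HasW (fun v => (h v : ℂ))
      (G1 (ls v) * (1 / v) + deriv ψ v * (starRingEnd ℂ) (ψ v))
      (G1 (ls v) * (1 / (starRingEnd ℂ) v) + ψ v * (starRingEnd ℂ) (deriv ψ v)) v := by
    intro v hv
    have k1 := HasW.comp (ls_W (hne v hv)) (G0_d (ls v))
    have k2 := HasW.holo (hd v hv)
    have k3 := ((HasW.const 1 v).add k1).add (k2.mul k2.conj)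
    have k4 := k3.congr (f := fun v => (h v : ℂ)) (by
      filter_upwards [hΩ.mem_nhds hv] with y hy
      rw [hhe y hy, ← nsq_eq]; push_cast; rfl)
    convert k4 using 1 <;> simp
    ring
  have e1 : wdzR h w = _ := (H w hw).wdz
  have e2 : wdzbarR h w = _ := (H w hw).wdzbar
  have e3 : wlapR h w = G2 (ls w) * (1 / w) * (1 / (starRingEnd ℂ) w)
      + deriv ψ w * (starRingEnd ℂ) (deriv ψ w) := by
    have k1 := HasW.comp (ls_W (hne w hw)) (G1_d (ls w))
    have hinv : HasW (fun v => 1 / v) (-(w ^ 2)⁻¹) 0 w := by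
      simpa using HasW.holo (hasDerivAt_inv (hne w hw))
    have k2 := k1.mul hinv.conj
    have k3 := k2.add ((HasW.holo (hd w hw)).mul (HasW.holo hd2).conj)
    have k4 := k3.congr (f := wdzbarR h) (by
      filter_upwards [hΩ.mem_nhds hw] with y hy
      have : wdzbarR h y = _ := (H y hy).wdzbar
      rw [this]; simp)
    rw [wlapR, k4.wdz]
    simp; ring
  have hw0 := hne w hw
  have main := alg (G0 (ls w)) (G2 (ls w) / ‖w‖ ^ 2) (‖ψ w‖ ^ 2) (G1 (ls w) * (1 / w)) (ψ w)
    (deriv ψ w) (G0_pos _) (by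
      have := G_conv (ls w)
      simp only [norm_mul, norm_div, norm_one, norm_real, mul_pow, Real.norm_eq_abs, sq_abs]
      rw [div_pow, one_pow, mul_one_div, ← mul_div_assoc]
      gcongr) rfl
  have fin : curvNum h w = (((1 + G0 (ls w) + ‖ψ w‖ ^ 2) * (G2 (ls w) / ‖w‖ ^ 2 + ‖deriv ψ w‖ ^ 2)
      - ‖G1 (ls w) * (1 / w) + deriv ψ w * (starRingEnd ℂ) (ψ w)‖ ^ 2 : ℝ) : ℂ) := by
    rw [curvNum, e1, e2, e3, hhe w hw, ofReal_sub, nsq_eq]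
    congr 1
    · rw [ofReal_mul, ofReal_add (G2 (ls w) / ‖w‖ ^ 2), ofReal_div, nsq_eq, nsq_eq]
      congr 2
      rw [mul_assoc, one_div_mul_one_div, mul_one_div]
    · congr 1
      simp only [map_add, map_mul, map_div₀, map_one, conj_ofReal, conj_conj]
      ring
  rw [fin]
  exact_mod_cast main
end

section
/- Let f : ℂ → ℂ be a nonconstant holomorphic (entire) function, and define h(z) = |f′(z)|²·(1 + |f(z)|²·u(|f(z)|²)²) + 1 on ℂ∖f⁻¹(0), with K the Gaussian curvature of h(z)|dz|². If p ∈ ℂ satisfies f(p) ≠ 0 and f′(p) = 0, then K(p) = −2·|f″(p)|²·(1 + |f(p)|²·u(|f(p)|²)²); in particular, K(p) = 0 if and only if f″(p) = 0. -/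
open Complex Filter Topology Metric
open scoped ComplexOrder

lemma dslope_log_analyticAt {t : ℝ} (ht : 0 < t) : AnalyticAt ℝ (dslope Real.log 1) t := by
  by_cases h : t = 1
  · subst h
    obtain ⟨q, hq⟩ := analyticAt_log (one_pos)
    exact ⟨_, hq.has_fpower_series_dslope_fslope⟩
  · have h1 : AnalyticAt ℝ (fun t : ℝ => Real.log t / (t - 1)) t :=
      (analyticAt_log ht).div (by fun_prop) (sub_ne_zero.2 h)
    refine h1.congr ?_
    filter_upwards [isOpen_ne.mem_nhds h] with x hx
    rw [dslope_of_ne _ hx, slope_def_field]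
    simp

lemma dslope_log_ne {t : ℝ} (ht : 0 < t) : dslope Real.log 1 t ≠ 0 := by
  by_cases h : t = 1
  · subst h; simp
  · rw [dslope_of_ne _ h, slope_def_field]
    have := Real.log_ne_zero_of_pos_of_ne_one ht h
    simpa [sub_eq_zero, h] using this

lemma u_analyticAt {t : ℝ} (ht : 0 < t) : AnalyticAt ℝ u t := by
  have h1 : AnalyticAt ℝ (fun t : ℝ => (t * dslope Real.log 1 t)⁻¹) t :=
    (analyticAt_id.mul (dslope_log_analyticAt ht)).inv (mul_ne_zero ht.ne' (dslope_log_ne ht))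
  refine h1.congr ?_
  filter_upwards [lt_mem_nhds ht] with x hx
  by_cases h : x = 1
  · subst h; simp [u]
  · rw [dslope_of_ne _ h, slope_def_field]
    simp [u, h, div_eq_mul_inv, mul_comm, mul_left_comm]

lemma wdzbar_mul {a b : ℂ → ℂ} {z : ℂ} (ha : DifferentiableAt ℝ a z)
    (hb : DifferentiableAt ℝ b z) :
    wdzbar (fun w => a w * b w) z = a z * wdzbar b z + b z * wdzbar a z := by
  unfold wdzbar
  rw [fderiv_fun_mul ha hb]
  simp only [ContinuousLinearMap.add_apply, ContinuousLinearMap.smul_apply, smul_eq_mul]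
  ring

lemma wdz_mul {a b : ℂ → ℂ} {z : ℂ} (ha : DifferentiableAt ℝ a z)
    (hb : DifferentiableAt ℝ b z) :
    wdz (fun w => a w * b w) z = a z * wdz b z + b z * wdz a z := by
  unfold wdz
  rw [fderiv_fun_mul ha hb]
  simp only [ContinuousLinearMap.add_apply, ContinuousLinearMap.smul_apply, smul_eq_mul]
  ring

lemma fderiv_hol {a : ℂ → ℂ} {z : ℂ} (ha : DifferentiableAt ℂ a z) (v : ℂ) :
    fderiv ℝ a z v = v * deriv a z := by
  rw [(ha.hasDerivAt.hasFDerivAt.restrictScalars ℝ).fderiv]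
  simp

lemma wdz_hol {a : ℂ → ℂ} {z : ℂ} (ha : DifferentiableAt ℂ a z) : wdz a z = deriv a z := by
  unfold wdz
  rw [fderiv_hol ha, fderiv_hol ha]
  linear_combination (-deriv a z / 2) * I_mul_I

lemma wdzbar_hol {a : ℂ → ℂ} {z : ℂ} (ha : DifferentiableAt ℂ a z) : wdzbar a z = 0 := by
  unfold wdzbar
  rw [fderiv_hol ha, fderiv_hol ha]
  linear_combination (deriv a z / 2) * I_mul_I

lemma wdzbar_conj {a : ℂ → ℂ} {z : ℂ} (ha : DifferentiableAt ℂ a z) :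
    wdzbar (fun w => (starRingEnd ℂ) (a w)) z = (starRingEnd ℂ) (deriv a z) := by
  have h : HasFDerivAt (fun w => (starRingEnd ℂ) (a w))
      ((conjCLE : ℂ →L[ℝ] ℂ).comp (fderiv ℝ a z)) z :=
    (conjCLE : ℂ →L[ℝ] ℂ).hasFDerivAt.comp z (ha.restrictScalars ℝ).hasFDerivAt
  unfold wdzbar
  rw [h.fderiv]
  simp only [ContinuousLinearMap.comp_apply, fderiv_hol ha]
  simp
  linear_combination (-(starRingEnd ℂ) (deriv a z) / 2) * I_mul_I

lemma main_aux (A : ℂ → ℂ) (hA : Differentiable ℂ A) (G : ℂ → ℝ) (p : ℂ)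
    (hG : ContDiffAt ℝ 2 G p) (hp : A p = 0) :
    gaussCurv (fun z => ‖A z‖ ^ 2 * G z + 1) p = ((-2 * ‖deriv A p‖ ^ 2 * G p : ℝ) : ℂ) := by
  have hGc : ContDiffAt ℝ 2 (fun z => (G z : ℂ)) p :=
    ofRealCLM.contDiff.contDiffAt.comp p hG
  have hA' : Differentiable ℂ (deriv A) := fun z =>
    ((hA.analyticAt z).deriv).differentiableAt
  have hAR : Differentiable ℝ A := hA.restrictScalars ℝ
  have hcA : Differentiable ℝ (fun w => (starRingEnd ℂ) (A w)) := fun z =>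
    (conjCLE : ℂ →L[ℝ] ℂ).differentiableAt.comp z (hAR z)
  have hcA' : Differentiable ℝ (fun w => (starRingEnd ℂ) (deriv A w)) := fun z =>
    (conjCLE : ℂ →L[ℝ] ℂ).differentiableAt.comp z (hA'.restrictScalars ℝ z)
  set B : ℂ → ℂ := fun z => (starRingEnd ℂ) (A z) * wdzbar (fun z => (G z : ℂ)) z
    + (G z : ℂ) * (starRingEnd ℂ) (deriv A z) with hB
  have hGd : DifferentiableAt ℝ (fun z => (G z : ℂ)) p := hGc.differentiableAt (by norm_num)
  have hev : wdzbarR (fun z => ‖A z‖ ^ 2 * G z + 1) =ᶠ[𝓝 p] fun z => A z * B z := by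
    filter_upwards [hGc.eventually (by simp)] with z hz
    have hz' : DifferentiableAt ℝ (fun z => (G z : ℂ)) z := hz.differentiableAt (by norm_num)
    have e : (fun w => ((‖A w‖ ^ 2 * G w + 1 : ℝ) : ℂ)) =
        fun w => A w * ((starRingEnd ℂ) (A w) * (G w : ℂ)) + 1 := by
      funext w
      push_cast
      rw [← mul_assoc, mul_conj, normSq_eq_norm_sq]
      push_cast
      rfl
    have e2 : wdzbar (fun w => A w * ((starRingEnd ℂ) (A w) * (G w : ℂ)) + 1) z
        = wdzbar (fun w => A w * ((starRingEnd ℂ) (A w) * (G w : ℂ))) z := by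
      unfold wdzbar
      rw [fderiv_add_const]
    unfold wdzbarR
    rw [e, e2, wdzbar_mul (hAR z) ((hcA z).fun_mul hz'), wdzbar_mul (hcA z) hz', wdzbar_hol (hA z),
      wdzbar_conj (hA z)]
    simp [hB]
  have hfd : DifferentiableAt ℝ (fderiv ℝ (fun z => (G z : ℂ))) p :=
    (hGc.fderiv_right (m := 1) (by norm_num)).differentiableAt (by norm_num)
  have hw : DifferentiableAt ℝ (wdzbar (fun z => (G z : ℂ))) p := by
    unfold wdzbar
    have h1 := hfd.clm_apply (differentiableAt_const (1 : ℂ))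
    have h2 := hfd.clm_apply (differentiableAt_const (I : ℂ))
    simp only [div_eq_mul_inv]
    exact (h1.fun_add (h2.const_mul I)).mul_const (2⁻¹ : ℂ)
  have hBd : DifferentiableAt ℝ B p := ((hcA p).mul hw).add (hGd.mul (hcA' p))
  have hl : wlapR (fun z => ‖A z‖ ^ 2 * G z + 1) p = B p * deriv A p := by
    unfold wlapR
    have : wdz (wdzbarR (fun z => ‖A z‖ ^ 2 * G z + 1)) p = wdz (fun z => A z * B z) p := by
      unfold wdz
      rw [hev.fderiv_eq]
    rw [this, wdz_mul (hAR p) hBd, wdz_hol (hA p), hp]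
    simp
  have h0 : wdzbarR (fun z => ‖A z‖ ^ 2 * G z + 1) p = 0 := by
    rw [hev.eq_of_nhds, hp, zero_mul]
  unfold gaussCurv curvNum
  rw [hl, h0]
  simp only [hB, hp]
  have hm : (starRingEnd ℂ) (deriv A p) * deriv A p = ((‖deriv A p‖ ^ 2 : ℝ) : ℂ) := by
    rw [mul_comm, mul_conj, normSq_eq_norm_sq]
  push_cast at hm ⊢
  simp
  linear_combination (2 * (G p : ℂ)) * hm

/-- for a nonconstant entire `f` and `p` with `f(p) ≠ 0`, `f′(p) = 0`,
the Gaussian curvature of `h|dz|²` at `p` equals `−2|f″(p)|²(1 + |f(p)|²u(|f(p)|²)²)`;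
in particular it vanishes iff `f″(p) = 0`. -/
theorem stmt7 (f : ℂ → ℂ) (hf : Differentiable ℂ f)
    (hfnc : ¬ ∃ c : ℂ, ∀ z, f z = c)
    (p : ℂ) (hfp : f p ≠ 0) (hf'p : deriv f p = 0) :
    gaussCurv (fun z =>
        ‖deriv f z‖ ^ 2 * (1 + ‖f z‖ ^ 2 * u (‖f z‖ ^ 2) ^ 2) + 1) p =
      ((-2 * ‖deriv (deriv f) p‖ ^ 2 *
        (1 + ‖f p‖ ^ 2 * u (‖f p‖ ^ 2) ^ 2) : ℝ) : ℂ) ∧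
    (gaussCurv (fun z =>
        ‖deriv f z‖ ^ 2 * (1 + ‖f z‖ ^ 2 * u (‖f z‖ ^ 2) ^ 2) + 1) p = 0 ↔
      deriv (deriv f) p = 0) := by
  have hG : ContDiffAt ℝ 2 (fun z => 1 + ‖f z‖ ^ 2 * u (‖f z‖ ^ 2) ^ 2) p := by
    have hfR : ContDiffAt ℝ 2 f p := (hf.contDiff (n := 2)).contDiffAt.restrict_scalars ℝ
    have hn : ContDiffAt ℝ 2 (fun z => ‖f z‖ ^ 2) p := hfR.norm_sq ℝ
    have hu : ContDiffAt ℝ 2 u (‖f p‖ ^ 2) :=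
      (u_analyticAt (by positivity)).contDiffAt
    have hc : ContDiffAt ℝ 2 (fun z => u (‖f z‖ ^ 2)) p :=
      ContDiffAt.comp (g := u) (f := fun z => ‖f z‖ ^ 2) p hu hn
    exact contDiffAt_const.add (hn.mul (hc.pow 2))
  have hA : Differentiable ℂ (deriv f) := fun z =>
    ((hf.analyticAt z).deriv).differentiableAt
  have key := main_aux (deriv f) hA _ p hG hf'p
  refine ⟨key, ?_⟩
  rw [key, ofReal_eq_zero]
  have hpos : 1 + ‖f p‖ ^ 2 * u (‖f p‖ ^ 2) ^ 2 ≠ 0 := by positivity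
  simp [hpos]
end

section
/- Let k ≥ 1 be an integer and define h_k : ℂ∖{0} → ℝ by h_k(z) = k²·|z|^{2(k−1)}·(1 + |z|^{2k}·u(|z|^{2k})²). Then h_k(z) → +∞ as z → 0 with z ∈ ℂ∖{0}. -/
open Complex Filter Topology Metric
open scoped ComplexOrder

/-- `h_k(z) → +∞` as `z → 0` in `ℂ∖{0}`. -/
theorem stmt11 (k : ℕ) (hk : 1 ≤ k) :
    Tendsto (fun w : ℂ =>
        (k : ℝ) ^ 2 * ‖w‖ ^ (2 * (k - 1)) *
          (1 + ‖w‖ ^ (2 * k) * u (‖w‖ ^ (2 * k)) ^ 2))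
      (𝓝[≠] (0 : ℂ)) atTop := by
  have h1 : Tendsto (fun w : ℂ => ‖w‖) (𝓝[≠] (0 : ℂ)) (𝓝[>] 0) := tendsto_norm_nhdsNE_zero
  have h2 : Tendsto (fun r : ℝ => ((Real.log r * r) ^ 2)⁻¹) (𝓝[>] (0 : ℝ)) atTop := by
    apply Tendsto.inv_tendsto_nhdsGT_zero
    rw [tendsto_nhdsWithin_iff]
    constructor
    · have := ((Real.continuous_mul_log.tendsto 0).pow 2).mono_left
        (nhdsWithin_le_nhds (s := Set.Ioi 0))
      simpa [mul_comm] using this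
    · filter_upwards [Ioo_mem_nhdsGT (show (0:ℝ) < 1 by norm_num)] with r hr
      have : Real.log r < 0 := Real.log_neg hr.1 hr.2
      have : Real.log r * r ≠ 0 := mul_ne_zero this.ne hr.1.ne'
      exact Set.mem_Ioi.2 (by positivity)
  have h3 := (h2.const_mul_atTop (show (0:ℝ) < 1/16 by norm_num))
  refine tendsto_atTop_mono' _ ?_ (h3.comp h1)
  have h4 : ∀ᶠ r : ℝ in 𝓝[>] 0, r ∈ Set.Ioo (0:ℝ) (1/2) :=
    Ioo_mem_nhdsGT (by norm_num)
  filter_upwards [h1.eventually h4] with w hw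
  simp only [Function.comp]
  generalize ‖w‖ = r at hw
  obtain ⟨h0, hr⟩ := hw
  obtain ⟨m, rfl⟩ : ∃ m, k = m + 1 := ⟨k - 1, by omega⟩
  have hlog : Real.log r < 0 := Real.log_neg h0 (by linarith)
  have ht : r ^ (2 * (m + 1)) ≤ 1 / 2 := by
    calc r ^ (2 * (m + 1)) ≤ r ^ 1 := pow_le_pow_of_le_one h0.le (by linarith) (by omega)
      _ ≤ 1 / 2 := by simpa using hr.le
  have htp : 0 < r ^ (2 * (m + 1)) := by positivity
  have hne : r ^ (2 * (m + 1)) ≠ 1 := by linarith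
  have hm : ((m + 1 : ℕ) : ℝ) ≠ 0 := by positivity
  have key : ((m + 1 : ℕ) : ℝ) ^ 2 * r ^ (2 * (m + 1 - 1)) *
      (1 + r ^ (2 * (m + 1)) * u (r ^ (2 * (m + 1))) ^ 2) =
      ((m + 1 : ℕ) : ℝ) ^ 2 * r ^ (2 * m) +
        (1 - r ^ (2 * (m + 1))) ^ 2 / 4 * ((Real.log r * r) ^ 2)⁻¹ := by
    rw [u, if_neg hne, Real.log_pow, Nat.add_sub_cancel]
    have e : r ^ (2 * (m + 1)) = r ^ (2 * m) * r ^ 2 := by ring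
    have hs : r ^ (2 * m) ≠ 0 := by positivity
    rw [e, Nat.cast_mul]
    generalize r ^ (2 * m) = s at *
    have := hlog.ne
    have := h0.ne'
    generalize ((m + 1 : ℕ) : ℝ) = K at *
    field_simp
    push_cast
    ring
  rw [key]
  have a : 0 ≤ ((m + 1 : ℕ) : ℝ) ^ 2 * r ^ (2 * m) := by positivity
  have b : (1:ℝ) / 16 ≤ (1 - r ^ (2 * (m + 1))) ^ 2 / 4 := by nlinarith
  have c : 0 ≤ ((Real.log r * r) ^ 2)⁻¹ := by positivity
  have := mul_le_mul_of_nonneg_right b c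
  linarith
end
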